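/- There exists a universal constant C > 0 (for instance C = 100 suffices) such that for every a ≥ C, the function f : ℝ₊ → ℝ₊ defined by f(x) = log a for 0 ≤ x ≤ a, f(x) = log x for a ≤ x ≤ 2a, and f(x) = √x − √(2a) + log(2a) for x ≥ 2a, is a (1/2)-convex function, i.e. f(t²x + (1−t)²y) ≤ t f(x) + (1−t) f(y) for all x,y ≥ 0 and t ∈ [0,1]. -/

import Mathlib

open Real

/-- The piecewise function equal to `log a` on `[0,a]`, `log x` on `[a,2a]` and
`√x - √(2a) + log(2a)` on `[2a,∞)`. -/
noncomputable def piecewiseF (a x : ℝ) : ℝ :=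
  if x ≤ a then Real.log a
  else if x ≤ 2 * a then Real.log x
  else Real.sqrt x - Real.sqrt (2 * a) + Real.log (2 * a)

noncomputable def kF (M p : ℝ) : ℝ := if p ≤ 1 then Real.log (p ^ 2) else M * (p - 1)

lemma kF_mono {M p q : ℝ} (hM : 0 ≤ M) (hp : 0 < p) (hpq : p ≤ q) : kF M p ≤ kF M q := by
  unfold kF
  split_ifs with h1 h2 h2
  · exact Real.log_le_log (by positivity) (by gcongr)
  · have : Real.log (p ^ 2) ≤ 0 := Real.log_nonpos (by positivity) (by nlinarith)
    have : 0 ≤ M * (q - 1) := mul_nonneg hM (by linarith)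
    linarith
  · linarith
  · gcongr

lemma kF_ge_log {M p : ℝ} (hM : 2 ≤ M) (hp : 0 < p) : Real.log (p ^ 2) ≤ kF M p := by
  unfold kF
  split_ifs with h1
  · exact le_rfl
  · have := Real.log_le_sub_one_of_pos hp
    rw [Real.log_pow]
    push_cast
    nlinarith

lemma log_case {P Q t s : ℝ} (hP : 0 < P) (hPQ : P ≤ Q) (hk : Q ≤ 3 * P) (ht : 0 ≤ t) (hs : 0 ≤ s)
    (hts : t + s = 1) : Real.log (t ^ 2 * P + s ^ 2 * Q) ≤ t * Real.log P + s * Real.log Q := by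
  have hQ : 0 < Q := by linarith
  have hc := (strictConcaveOn_log_Ioi.concaveOn).2 (Set.mem_Ioi.2 (inv_pos.2 hP))
    (Set.mem_Ioi.2 (inv_pos.2 hQ)) ht hs hts
  simp only [smul_eq_mul, Real.log_inv] at hc
  have hA : 0 < t * P⁻¹ + s * Q⁻¹ := by
    have h1 : 0 < P⁻¹ := inv_pos.2 hP
    have h2 : 0 < Q⁻¹ := inv_pos.2 hQ
    rcases ht.eq_or_lt with h | h
    · have : s = 1 := by linarith
      subst this; rw [← h]; simpa using hQ
    · positivity
  have hW : 0 < t ^ 2 * P + s ^ 2 * Q := by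
    rcases ht.eq_or_lt with h | h
    · have : s = 1 := by linarith
      subst this; rw [← h]; simpa using hQ
    · positivity
  have hprod : (t ^ 2 * P + s ^ 2 * Q) * (t * P⁻¹ + s * Q⁻¹) ≤ 1 := by
    have e : t * P⁻¹ + s * Q⁻¹ = (t * Q + s * P) / (P * Q) := by field_simp
    rw [e, ← mul_div_assoc, div_le_one (by positivity)]
    have h3 : 0 ≤ t * s * (3 * P * Q - t * P ^ 2 - s * Q ^ 2) := by
      apply mul_nonneg (mul_nonneg ht hs)
      have h4 : P ^ 2 ≤ 3 * P * Q := by nlinarith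
      have h5 : Q ^ 2 ≤ 3 * P * Q := by nlinarith
      have : s = 1 - t := by linarith
      subst this
      nlinarith
    have : s = 1 - t := by linarith
    subst this
    nlinarith
  have := Real.log_nonpos (by positivity) hprod
  rw [Real.log_mul hW.ne' hA.ne'] at this
  linarith

set_option maxHeartbeats 2000000 in
lemma core {M p q w t s : ℝ} (hM : 12 ≤ M) (hp : 0 < p) (hp2 : 1 / 2 ≤ p ^ 2) (hpq : p ≤ q)
    (hw : 0 < w) (ht : 0 ≤ t) (hs : 0 ≤ s) (hts : t + s = 1)
    (hwe : w ^ 2 = t ^ 2 * p ^ 2 + s ^ 2 * q ^ 2) :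
    kF M w ≤ t * kF M p + s * kF M q := by
  have hq : 0 < q := by linarith
  have hwle : w ≤ t * p + s * q := by
    apply le_of_sq_le_sq _ (by positivity)
    have : 0 ≤ (t * p) * (s * q) := by positivity
    nlinarith
  by_cases hw1 : w ≤ 1
  · have hkw : kF M w = Real.log (t ^ 2 * p ^ 2 + s ^ 2 * q ^ 2) := by
      rw [← hwe]; unfold kF; rw [if_pos hw1]
    by_cases hk : q ^ 2 ≤ 3 * p ^ 2
    · rw [hkw]
      have h1 := log_case (by positivity) (by gcongr : p ^ 2 ≤ q ^ 2) hk ht hs hts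
      have h2 := mul_le_mul_of_nonneg_left (kF_ge_log (M := M) (by linarith) hp) ht
      have h3 := mul_le_mul_of_nonneg_left (kF_ge_log (M := M) (by linarith) hq) hs
      linarith
    · push Not at hk
      have hq6 : 6 / 5 ≤ q := by nlinarith
      have hkq : kF M q = M * (q - 1) := by unfold kF; rw [if_neg (by linarith)]
      have hkq' : 2 * q ≤ kF M q := by rw [hkq]; nlinarith
      by_cases hp1 : p ≤ 1
      · have hkp : kF M p = Real.log (p ^ 2) := by unfold kF; rw [if_pos hp1]
        have hlp : Real.log (p ^ 2) ≤ 0 := Real.log_nonpos (by positivity) (by nlinarith)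
        have hpp : 0 < p ^ 2 := by positivity
        have hww : 0 < w ^ 2 := by positivity
        have h1 : Real.log (w ^ 2) ≤ Real.log (p ^ 2) + (w ^ 2 / p ^ 2 - 1) := by
          have := Real.log_le_sub_one_of_pos (div_pos hww hpp)
          rw [Real.log_div hww.ne' hpp.ne'] at this
          linarith
        have hsq : s * q ≤ 1 := by
          have : (s * q) ^ 2 ≤ 1 ^ 2 := by
            have : 0 ≤ t ^ 2 * p ^ 2 := by positivity
            nlinarith
          exact le_of_sq_le_sq this (by norm_num)
        have h2 : w ^ 2 / p ^ 2 - 1 ≤ 2 * (s * q) := by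
          rw [sub_le_iff_le_add, div_le_iff₀ hpp, hwe]
          have ht2 : t ^ 2 ≤ 1 := by nlinarith
          have h0 : 0 ≤ s * q := by positivity
          have h3 : s ^ 2 * q ^ 2 ≤ s * q := by
            have := mul_le_mul_of_nonneg_left hsq h0
            linarith
          have h4 := mul_le_mul_of_nonneg_left hp2 h0
          have h5 := mul_le_mul_of_nonneg_right ht2 hpp.le
          linarith
        rw [hkw, ← hwe, hkp]
        have h3 := mul_le_mul_of_nonneg_left hkq' hs
        have : t = 1 - s := by linarith
        rw [this]
        have h6 := mul_nonneg hs (neg_nonneg.2 hlp)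
        linarith
      · have : kF M p = M * (p - 1) := by unfold kF; rw [if_neg hp1]
        have hp0 : 0 ≤ kF M p := by
          rw [this]; exact mul_nonneg (by linarith) (by linarith)
        have : kF M w ≤ 0 := by
          rw [hkw, ← hwe]; exact Real.log_nonpos (by positivity) (pow_le_one₀ hw.le hw1)
        have : 0 ≤ t * kF M p := mul_nonneg ht hp0
        have : 0 ≤ s * kF M q := mul_nonneg hs (by linarith)
        linarith
  · push Not at hw1
    have hkw : kF M w = M * (w - 1) := by unfold kF; rw [if_neg (by linarith)]
    have hq1 : 1 < q := by
      by_contra hcon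
      push Not at hcon
      have h1 : t * p ≤ t * 1 := by gcongr; linarith
      have h2 : s * q ≤ s * 1 := by gcongr
      linarith
    have hkq : kF M q = M * (q - 1) := by unfold kF; rw [if_neg (by linarith)]
    rw [hkw, hkq]
    by_cases hp1 : p ≤ 1
    · have hkp : kF M p = Real.log (p ^ 2) := by unfold kF; rw [if_pos hp1]
      rw [hkp]
      have hpp : 0 < p ^ 2 := by positivity
      have hl : -(2 * (1 - p ^ 2)) ≤ Real.log (p ^ 2) := by
        have h1 := Real.one_sub_inv_le_log_of_pos hpp
        have h2 : (p ^ 2)⁻¹ ≤ 1 + 2 * (1 - p ^ 2) := by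
          rw [inv_le_iff_one_le_mul₀ hpp]
          have hp3 : p ^ 2 ≤ 1 := pow_le_one₀ hp.le hp1
          nlinarith [mul_nonneg (sub_nonneg.2 hp3) (sub_nonneg.2 hp2)]
        linarith
      have ht1 : t ≤ 1 := by linarith
      have hd0 : 0 ≤ 1 - p ^ 2 := by nlinarith
      set b := s * q with hb
      have hb0 : 0 ≤ b := by positivity
      have hwb : w ^ 2 = t ^ 2 * p ^ 2 + b ^ 2 := by rw [hwe, hb]; ring
      have hb2 : 1 - p ^ 2 ≤ b ^ 2 := by
        have : t ^ 2 * p ^ 2 ≤ p ^ 2 := by nlinarith [mul_nonneg hpp.le (by nlinarith : 0 ≤ 1 - t ^ 2)]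
        nlinarith
      -- key: 6 (t + b - w) ≥ t (1-p^2)
      have key : t * (1 - p ^ 2) ≤ 6 * (t + b - w) := by
        have hw' : w ≤ t + b - t * (1 - p ^ 2) / 6 := by
          have hd1 : 1 - p ^ 2 ≤ 1 / 2 := by linarith
          set d := 1 - p ^ 2 with hd
          have hpd : p ^ 2 = 1 - d := by rw [hd]; ring
          apply le_of_sq_le_sq
          · rw [hwb, hpd]
            -- (t+b-td/6)^2 - t^2(1-d) - b^2
            have e : (t + b - t * d / 6) ^ 2 - (t ^ 2 * (1 - d) + b ^ 2)
              = t * (2 * b * (1 - d / 6) + t * d * (2 / 3) + t * d ^ 2 / 36) := by ring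
            have : 0 ≤ t * (2 * b * (1 - d / 6) + t * d * (2 / 3) + t * d ^ 2 / 36) := by
              have : 0 ≤ 1 - d / 6 := by linarith
              positivity
            linarith
          · nlinarith [mul_nonneg ht (by linarith : 0 ≤ 1 - d / 6)]
        linarith
      have h1 := mul_le_mul_of_nonneg_left hl ht
      have h2 : 0 ≤ t + b - w := by nlinarith [mul_nonneg ht hd0]
      have h3 : 12 * (t + b - w) ≤ M * (t + b - w) := by gcongr
      have e : s * (M * (q - 1)) = M * (b - s) := by rw [hb]; ring
      have : s = 1 - t := by linarith
      rw [e, this]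
      nlinarith
    · have hkp : kF M p = M * (p - 1) := by unfold kF; rw [if_neg hp1]
      rw [hkp]
      have : M * (w - 1) ≤ M * (t * p + s * q - (t + s)) := by rw [hts]; gcongr
      linarith

lemma core' {M p q w t s : ℝ} (hM : 12 ≤ M) (hp : 0 < p) (hp2 : 1 / 2 ≤ p ^ 2)
    (hq : 0 < q) (hq2 : 1 / 2 ≤ q ^ 2)
    (hw : 0 < w) (ht : 0 ≤ t) (hs : 0 ≤ s) (hts : t + s = 1)
    (hwe : w ^ 2 = t ^ 2 * p ^ 2 + s ^ 2 * q ^ 2) :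
    kF M w ≤ t * kF M p + s * kF M q := by
  rcases le_total p q with h | h
  · exact core hM hp hp2 h hw ht hs hts hwe
  · have := core hM hq hq2 h hw hs ht (by linarith) (by linarith)
    linarith

lemma F_eq {a x : ℝ} (ha : 0 < a) :
    piecewiseF a x = Real.log (2 * a) + kF (√(2 * a)) (√(max x a / (2 * a))) := by
  have hm : 0 < max x a := lt_max_of_lt_right ha
  have hq : 0 < max x a / (2 * a) := by positivity
  have hle : √(max x a / (2 * a)) ≤ 1 ↔ max x a ≤ 2 * a := by
    rw [Real.sqrt_le_iff, one_pow, div_le_one (by positivity)]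
    simp
  unfold kF piecewiseF
  simp only [hle, Real.sq_sqrt hq.le]
  rw [Real.log_div hm.ne' (by positivity)]
  split_ifs with h1 h2 h2 h2 h2
  · rw [max_eq_right h1]; ring
  · rw [max_eq_right h1] at h2; linarith
  · rw [max_eq_left (by linarith)]; ring
  · rw [max_eq_left (by linarith)] at h2; contradiction
  · exact absurd ((le_max_left _ _).trans h2) (by assumption)
  · rw [max_eq_left (by linarith), Real.sqrt_div (by linarith)]
    have : √(2 * a) ≠ 0 := by positivity
    field_simp
    ring

/-- There is a universal constant `C > 0` such that for every `a ≥ C` the piecewise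
function above is `(1/2)`-convex on `ℝ₊`. -/
theorem piecewiseF_half_convex :
    ∃ C : ℝ, 0 < C ∧
      ∀ a : ℝ, C ≤ a →
        ∀ x y : ℝ, 0 ≤ x → 0 ≤ y → ∀ t : ℝ, 0 ≤ t → t ≤ 1 →
          piecewiseF a (t ^ 2 * x + (1 - t) ^ 2 * y) ≤
            t * piecewiseF a x + (1 - t) * piecewiseF a y := by
  refine ⟨100, by norm_num, ?_⟩
  intro a ha x y hx hy t ht ht1
  have ha0 : 0 < a := by linarith
  have hM : 12 ≤ √(2 * a) := by
    apply Real.le_sqrt_of_sq_le; linarith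
  have hs : 0 ≤ 1 - t := by linarith
  have hbase : ∀ u : ℝ, 0 < max u a / (2 * a) ∧ 1 / 2 ≤ max u a / (2 * a) := by
    intro u
    have := le_max_right u a
    refine ⟨by positivity, ?_⟩
    rw [le_div_iff₀ (by positivity)]; linarith
  rw [F_eq ha0, F_eq ha0, F_eq ha0]
  set M := √(2 * a)
  set p := √(max x a / (2 * a)) with hp
  set q := √(max y a / (2 * a)) with hq
  have hp0 : 0 < p := Real.sqrt_pos.2 (hbase x).1
  have hq0 : 0 < q := Real.sqrt_pos.2 (hbase y).1
  have hpe : p ^ 2 = max x a / (2 * a) := Real.sq_sqrt (hbase x).1.le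
  have hqe : q ^ 2 = max y a / (2 * a) := Real.sq_sqrt (hbase y).1.le
  have hp2 : 1 / 2 ≤ p ^ 2 := hpe ▸ (hbase x).2
  have hq2 : 1 / 2 ≤ q ^ 2 := hqe ▸ (hbase y).2
  suffices h : kF M √(max (t ^ 2 * x + (1 - t) ^ 2 * y) a / (2 * a)) ≤
      t * kF M p + (1 - t) * kF M q by linarith
  have hW : 0 < √(max (t ^ 2 * x + (1 - t) ^ 2 * y) a / (2 * a)) := Real.sqrt_pos.2 (hbase _).1
  rcases le_total (t ^ 2 * x + (1 - t) ^ 2 * y) a with hz | hz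
  · have h1 : kF M √(max (t ^ 2 * x + (1 - t) ^ 2 * y) a / (2 * a)) ≤ kF M p := by
      apply kF_mono (by linarith) hW
      rw [max_eq_right hz, hp]; gcongr; exact le_max_right _ _
    have h2 : kF M √(max (t ^ 2 * x + (1 - t) ^ 2 * y) a / (2 * a)) ≤ kF M q := by
      apply kF_mono (by linarith) hW
      rw [max_eq_right hz, hq]; gcongr; exact le_max_right _ _
    nlinarith [mul_le_mul_of_nonneg_left h1 ht, mul_le_mul_of_nonneg_left h2 hs]
  · have hle : √(max (t ^ 2 * x + (1 - t) ^ 2 * y) a / (2 * a)) ≤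
        √(t ^ 2 * p ^ 2 + (1 - t) ^ 2 * q ^ 2) := by
      apply Real.sqrt_le_sqrt
      rw [max_eq_left hz, hpe, hqe, ← mul_div_assoc, ← mul_div_assoc, ← add_div]
      gcongr
      · exact le_max_left _ _
      · exact le_max_left _ _
    refine (kF_mono (by linarith) hW hle).trans ?_
    exact core' hM hp0 hp2 hq0 hq2 (hW.trans_le hle) ht hs (by ring) (Real.sq_sqrt (by positivity))
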